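/- Fix a segment assignment φ relative to a rooted spanning tree D of G. Let s_0, s_1, …, s_n be states with s_0 the empty partial function, such that for every 0 ≤ k < n the state s_{k+1} is an extension of s_k; let v_k be the unique vertex in dom(s_k) \ dom(s_{k−1}), and assume that s_k(v_k) is the base segment containing the k-th position in the color order. Then the ordering π that assigns to each v_k the k-th position in the color order is a b-ordering of G. -/

import Mathlib

/-!
The vertex added in step `k` receives the `k`-th position in the color order, so the step at which a
vertex is added and its position determine each other and `π` is a bijection onto `{1,…,n}`.

For an edge whose ends are added in steps `j < k`, let `p` and `q` be the `j`-th and `k`-th position.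
Values of states persist, so the extension condition of step `k` compares the base segments of `p`
and `q`: the segment of `q` is that of `p` or the one just before it. In the first case the distance
is at most `b`. In the second, `p` precedes `q` in the color order but lies in a later segment, hence
`p` has strictly smaller color, and `p - q = (b + 1) - (color q - color p)` lies between `1` and `b`
(`abs_sub_le_of_colorLt`).
-/

/-- `segm b i = ⌈i/(b+1)⌉`, the base-segment number of position `i`. -/
def segm (b i : ℕ) : ℕ := (i + b) / (b + 1)

/-- `color b i = ((i-1) mod (b+1)) + 1`, the color of position `i`. -/
def color (b i : ℕ) : ℕ := (i - 1) % (b + 1) + 1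

/-- The segment `Θ_{(i,j)} = {i(b+1)+1, …, j(b+1)} ∩ {1,…,n}`. -/
def Seg (b n : ℕ) (i j : ℤ) : Set ℕ :=
  {p : ℕ | i * (b + 1) < (p : ℤ) ∧ (p : ℤ) ≤ j * (b + 1) ∧ 1 ≤ p ∧ p ≤ n}

/-- `q` strictly precedes `p` in the color order (lexicographic by (color, segment)). -/
def ColorLt (b q p : ℕ) : Prop :=
  color b q < color b p ∨ (color b q = color b p ∧ segm b q < segm b p)

instance (b q p : ℕ) : Decidable (ColorLt b q p) := by
  unfold ColorLt; infer_instance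

/-- The number of positions in `{1,…,n}` strictly preceding `p` in the color order;
the first `k` positions in the color order are those of rank `< k`. -/
def rank (b n p : ℕ) : ℕ := ((Finset.Icc 1 n).filter (fun q => ColorLt b q p)).card

/-- A rooted spanning tree of `G` with root `u0` and parent map `pa`. -/
def IsRootedSpanningTree {V : Type*} (G : SimpleGraph V) (u0 : V) (pa : V → V) : Prop :=
  pa u0 = u0 ∧ (∀ v, v ≠ u0 → G.Adj v (pa v)) ∧ ∀ v, ∃ m : ℕ, pa^[m] v = u0

/-- A vertex is a leaf of the rooted tree with parent map `pa` if it is not the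
parent of any vertex other than itself. -/
def IsLeaf {V : Type*} (pa : V → V) (v : V) : Prop := ∀ w, pa w = v → w = v

open Classical in
/-- The segment assigned by the segment assignment with start indices `φ`:
a leaf `v` gets `Θ_{(φ v, φ v + 4)}`, an inner vertex gets `Θ_{(φ v, φ v + 2)}`. -/
noncomputable def SegOf {V : Type*} (b n : ℕ) (pa : V → V) (φ : V → ℤ) (v : V) : Set ℕ :=
  if IsLeaf pa v then Seg b n (φ v) (φ v + 4) else Seg b n (φ v) (φ v + 2)

/-- A state for the segment assignment with start indices `φ` (relative to the tree
with parent map `pa`): a partial map `s` from vertices to base-segment indices such that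
(0) each assigned base segment `Θ_i` is contained in `φ v`;
(1) the vertices of `dom s` can be assigned to the first `|dom s|` positions in the
    color order compatibly with `s`;
(2) for every edge `uv`: if `s v = Θ_i` is defined and `s u` is undefined with
    `φ u = Θ_{(k,l)}` then `k ≤ i`, and if both `s u = Θ_k`, `s v = Θ_i` are defined
    then `|i − k| ≤ 1`. -/
def IsState {V : Type*} [Fintype V] (G : SimpleGraph V) (b n : ℕ) (pa : V → V)
    (φ : V → ℤ) (s : V → Option ℤ) : Prop :=
  (∀ v i, s v = some i → Seg b n i (i + 1) ⊆ SegOf b n pa φ v) ∧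
  (∃ g : V → ℕ, Set.BijOn g {v | (s v).isSome}
      {q : ℕ | 1 ≤ q ∧ q ≤ n ∧ rank b n q < {v | (s v).isSome}.ncard} ∧
      ∀ v i, s v = some i → g v ∈ Seg b n i (i + 1)) ∧
  (∀ u v i, G.Adj u v → s v = some i → s u = none → φ u ≤ i) ∧
  (∀ u v i k, G.Adj u v → s u = some k → s v = some i → |i - k| ≤ 1)

/-- `s'` extends `s` by defining one new vertex `v`; for every edge `uv`
with `s' u = Θ_k` defined and `s' v = Θ_i`, one has `k − 1 ≤ i ≤ k`. -/
def IsExtension {V : Type*} (G : SimpleGraph V) (s s' : V → Option ℤ) : Prop :=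
  ∃ v, s v = none ∧ (s' v).isSome ∧ (∀ w, w ≠ v → s' w = s w) ∧
    ∀ u k i, G.Adj u v → s' u = some k → s' v = some i → k - 1 ≤ i ∧ i ≤ k

/-- Positions written in coordinates: segment number and color. -/
lemma eq_segm_color (b p : ℕ) (hp : 1 ≤ p) :
    (p : ℤ) = ((segm b p : ℤ) - 1) * (b + 1) + color b p ∧ 1 ≤ color b p ∧ color b p ≤ b + 1 := by
  obtain ⟨m, rfl⟩ : ∃ m, p = m + 1 := ⟨p - 1, by omega⟩
  have h1 : segm b (m + 1) = m / (b + 1) + 1 := by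
    unfold segm
    rw [show m + 1 + b = m + (b + 1) by ring, Nat.add_div_right _ (by omega)]
  have h2 : color b (m + 1) = m % (b + 1) + 1 := by simp [color]
  have h3 := Nat.div_add_mod m (b + 1)
  have h4 := Nat.mod_lt m (show 0 < b + 1 by omega)
  refine ⟨?_, by omega, by omega⟩
  rw [h1, h2]
  zify at h3
  push_cast
  linarith

lemma ColorLt.trans {b p q r : ℕ} (h₁ : ColorLt b p q) (h₂ : ColorLt b q r) : ColorLt b p r := by
  unfold ColorLt at *
  omega

/-- On positions, the color order is reflected by the rank, because it is a strict total order. -/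
lemma colorLt_of_rank_lt {b n p q : ℕ} (hp : 1 ≤ p) (hq : 1 ≤ q)
    (h : rank b n p < rank b n q) : ColorLt b p q := by
  by_contra hnot
  by_cases hqp : ColorLt b q p
  · have : rank b n q ≤ rank b n p := by
      apply Finset.card_le_card
      intro r hr
      rw [Finset.mem_filter] at hr ⊢
      exact ⟨hr.1, hr.2.trans hqp⟩
    omega
  · have hc : color b p = color b q ∧ segm b p = segm b q := by
      unfold ColorLt at *
      omega
    have : p = q := by
      have h1 := (eq_segm_color b p hp).1
      have h2 := (eq_segm_color b q hq).1
      rw [hc.1, hc.2] at h1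
      exact_mod_cast h1.trans h2.symm
    subst this
    omega

lemma abs_sub_le_of_colorLt {b p q : ℕ} (hp : 1 ≤ p) (hq : 1 ≤ q) (h : ColorLt b p q)
    (h₁ : (segm b p : ℤ) - 1 ≤ segm b q) (h₂ : (segm b q : ℤ) ≤ segm b p) :
    |(p : ℤ) - (q : ℤ)| ≤ b := by
  obtain ⟨hp1, hp2, hp3⟩ := eq_segm_color b p hp
  obtain ⟨hq1, hq2, hq3⟩ := eq_segm_color b q hq
  rcases eq_or_lt_of_le h₂ with he | hlt
  · rw [he] at hq1
    rw [abs_le]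
    constructor <;> linarith
  · have he : (segm b q : ℤ) = segm b p - 1 := by omega
    have hc : color b p < color b q := by
      unfold ColorLt at h
      omega
    rw [he] at hq1
    have : (p : ℤ) - q = (b + 1) + color b p - color b q := by
      rw [hp1, hq1]
      ring
    rw [this, abs_le]
    constructor <;> omega


/-- if `s 0, s 1, …, s n` are states (for the segment assignment `φ`)
with `s 0` the empty partial map and each `s (k+1)` an extension of `s k`, `v k` is
the unique vertex of `dom (s k) \ dom (s (k−1))`, `pos k` is the `k`-th position in
the color order (i.e. the position of rank `k − 1`), and `s k (v k)` is the base
segment containing `pos k`, then the ordering `π` assigning position `pos k` to the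
vertex `v k` is a `b`-ordering of `G`. -/
theorem stmt9 {V : Type*} [Fintype V] (G : SimpleGraph V) (b n : ℕ)
    (hb : 1 ≤ b) (hn : 2 ≤ n) (hcard : Fintype.card V = n)
    (u0 : V) (pa : V → V) (htree : IsRootedSpanningTree G u0 pa)
    (φ : V → ℤ)
    (hφinner : ∀ v, v ≠ u0 → ¬ IsLeaf pa v → |φ v - φ (pa v)| = 1)
    (hφleaf : ∀ v, IsLeaf pa v → φ v = φ (pa v) - 1)
    (s : ℕ → V → Option ℤ)
    (hstate : ∀ k, k ≤ n → IsState G b n pa φ (s k))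
    (hzero : ∀ v, s 0 v = none)
    (hext : ∀ k, k < n → IsExtension G (s k) (s (k + 1)))
    (v : ℕ → V)
    (hv : ∀ k, 1 ≤ k → k ≤ n → (s k (v k)).isSome ∧ s (k - 1) (v k) = none)
    (pos : ℕ → ℕ)
    (hpos : ∀ k, 1 ≤ k → k ≤ n →
      (1 ≤ pos k ∧ pos k ≤ n) ∧ rank b n (pos k) = k - 1)
    (hval : ∀ k, 1 ≤ k → k ≤ n →
      s k (v k) = some ((segm b (pos k) : ℤ) - 1)) :
    ∃ π : V → ℕ, Set.BijOn π Set.univ (Set.Icc 1 n) ∧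
      (∀ k, 1 ≤ k → k ≤ n → π (v k) = pos k) ∧
      ∀ u w, G.Adj u w → |(π u : ℤ) - (π w : ℤ)| ≤ b := by
  -- The vertex witnessing the extension in step `k + 1` is `v (k + 1)`.
  have hstep : ∀ k, k < n → (∀ w, w ≠ v (k + 1) → s (k + 1) w = s k w) ∧
      ∀ u a i, G.Adj u (v (k + 1)) → s (k + 1) u = some a → s (k + 1) (v (k + 1)) = some i →
        a - 1 ≤ i ∧ i ≤ a := by
    intro k hk
    obtain ⟨x, -, -, hx3, hx4⟩ := hext k hk
    have hvk := hv (k + 1) (by omega) (by omega)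
    have hxv : v (k + 1) = x := by
      by_contra hne
      have h1 := hvk.1
      rw [hx3 _ hne] at h1
      have h2 := hvk.2
      simp only [Nat.add_sub_cancel] at h2
      simp [h2] at h1
    rw [hxv]
    exact ⟨hx3, hx4⟩
  have hmono : ∀ j k x i, j ≤ k → k ≤ n → s j x = some i → s k x = some i := by
    intro j k x i hjk
    induction k, hjk using Nat.le_induction with
    | base => exact fun _ h => h
    | succ k hjk ih =>
      intro hk h
      have h1 := ih (by omega) h
      have hne : x ≠ v (k + 1) := by
        rintro rfl
        have h2 := (hv (k + 1) (by omega) hk).2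
        simp only [Nat.add_sub_cancel] at h2
        simp [h2] at h1
      rw [(hstep k (by omega)).1 x hne, h1]
  have hvne : ∀ j k, 1 ≤ j → j < k → k ≤ n → v j ≠ v k := by
    intro j k hj hjk hk heq
    have h1 := hmono j (k - 1) _ _ (by omega) (by omega) (hval j hj (by omega))
    rw [heq, (hv k (by omega) hk).2] at h1
    cases h1
  have hinj : Function.Injective (fun i : Fin n => v (i + 1)) := by
    intro i j hij
    by_contra hne
    rcases lt_or_gt_of_ne hne with h | h
    · exact hvne (i + 1) (j + 1) (by omega) (by simpa using h) (by omega) hij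
    · exact hvne (j + 1) (i + 1) (by omega) (by simpa using h) (by omega) hij.symm
  have hbij : Function.Bijective (fun i : Fin n => v (i + 1)) :=
    (Fintype.bijective_iff_injective_and_card _).2 ⟨hinj, by simp [hcard]⟩
  let e := Equiv.ofBijective _ hbij
  have he : ∀ x, v ((e.symm x : ℕ) + 1) = x := fun x => e.apply_symm_apply x
  -- The edge bound, for the ends listed in the order in which they are added.
  have hedge : ∀ j k, 1 ≤ j → j < k → k ≤ n → G.Adj (v j) (v k) →
      |(pos j : ℤ) - (pos k : ℤ)| ≤ b := by
    intro j k hj hjk hk hadj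
    obtain ⟨m, rfl⟩ : ∃ m, k = m + 1 := ⟨k - 1, by omega⟩
    obtain ⟨⟨hpj, -⟩, hrj⟩ := hpos j hj (by omega)
    obtain ⟨⟨hpk, -⟩, hrk⟩ := hpos (m + 1) (by omega) hk
    have h := (hstep m (by omega)).2 (v j) _ _ hadj
      (hmono j (m + 1) _ _ (by omega) hk (hval j hj (by omega))) (hval (m + 1) (by omega) hk)
    exact abs_sub_le_of_colorLt hpj hpk
      (colorLt_of_rank_lt (n := n) hpj hpk (by omega)) (by omega) (by omega)
  let π : V → ℕ := fun x => pos ((e.symm x : ℕ) + 1)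
  have hmaps : ∀ x, π x ∈ Finset.Icc 1 n := fun x =>
    Finset.mem_Icc.2 (hpos ((e.symm x : ℕ) + 1) (by omega) (by omega)).1
  have hπinj : Function.Injective π := by
    intro x y hxy
    have hx := (hpos ((e.symm x : ℕ) + 1) (by omega) (by omega)).2
    have hy := (hpos ((e.symm y : ℕ) + 1) (by omega) (by omega)).2
    change pos _ = pos _ at hxy
    rw [hxy] at hx
    exact e.symm.injective (Fin.ext (by omega))
  refine ⟨π, ⟨fun x _ => by simpa using hmaps x, hπinj.injOn, ?_⟩, ?_, ?_⟩
  · have himg : Finset.univ.image π = Finset.Icc 1 n := by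
      apply Finset.eq_of_subset_of_card_le
      · intro y hy
        obtain ⟨x, -, rfl⟩ := Finset.mem_image.1 hy
        exact hmaps x
      · rw [Finset.card_image_of_injective _ hπinj, Finset.card_univ, hcard]
        simp
    intro y hy
    have hy' : y ∈ Finset.univ.image π := by
      rw [himg]
      simpa using hy
    obtain ⟨x, -, rfl⟩ := Finset.mem_image.1 hy'
    exact ⟨x, trivial, rfl⟩
  · intro k hk1 hkn
    have hk : e ⟨k - 1, by omega⟩ = v k := by
      change v (k - 1 + 1) = v k
      rw [Nat.sub_add_cancel hk1]
    change pos ((e.symm (v k) : ℕ) + 1) = pos k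
    rw [← hk, Equiv.symm_apply_apply]
    simp [Nat.sub_add_cancel hk1]
  · intro u w hadj
    change |(pos ((e.symm u : ℕ) + 1) : ℤ) - (pos ((e.symm w : ℕ) + 1) : ℤ)| ≤ b
    have hne : (e.symm u : ℕ) ≠ e.symm w := fun h =>
      hadj.ne (e.symm.injective (Fin.ext h))
    rcases lt_or_gt_of_ne hne with h | h
    · exact hedge _ _ (by omega) (by omega) (by omega) (by rwa [he, he])
    · rw [abs_sub_comm]
      exact hedge _ _ (by omega) (by omega) (by omega) (by rw [he, he]; exact hadj.symm)
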